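/- Let y = A x₀ + e for some x₀ ∈ ℝ^d and e ∈ ℝ^n, let β = max_{1≤i≤d} ‖a_i‖₂, and let α_{2k} > 0 satisfy ‖Ax‖₂ ≥ α_{2k} ‖x‖₁ for every x with at most 2k nonzero entries. Let λ > 0 and suppose x̂ ∈ ℝ^d is k-sparse and satisfies F2_λ(x̂) ≤ F2_λ(P_k(x₀)), where F2_λ(x) = (1/2)‖Ax − y‖₂² + λ τ_k(x). Then ‖x̂ − x₀‖₁ ≤ (2/α_{2k})‖e‖₂ + (1 + 2β/α_{2k}) τ_k(x₀). -/

import Mathlib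

open Finset Filter Topology

/-- Euclidean (ℓ₂) norm of a vector in ℝ^m. -/
noncomputable def l2norm {m : ℕ} (v : Fin m → ℝ) : ℝ := Real.sqrt (∑ i, v i ^ 2)

/-- The trimmed lasso penalty: the minimum, over index sets Λ of size d − k,
of the ℓ₁ norm of x restricted to Λ. -/
noncomputable def tauTL {d : ℕ} (k : ℕ) (x : Fin d → ℝ) : ℝ :=
  sInf ((fun Λ : Finset (Fin d) => ∑ i ∈ Λ, |x i|) '' {Λ : Finset (Fin d) | Λ.card = d - k})

/-- `p` is a k-sparse vector closest to `x` in ℓ₁ norm (a valid choice of P_k(x)). -/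
def IsKSparseProj {d : ℕ} (k : ℕ) (x p : Fin d → ℝ) : Prop :=
  Set.ncard {i : Fin d | p i ≠ 0} ≤ k ∧
  ∀ z : Fin d → ℝ, Set.ncard {i : Fin d | z i ≠ 0} ≤ k →
    (∑ i, |x i - p i|) ≤ ∑ i, |x i - z i|

/-!
Both `x̂` and `p = P_k(x₀)` are `k`-sparse, so their penalties vanish and optimality of `x̂` says
only that its residual `A x̂ - y` is no larger than that of `p`. The difference `x̂ - p` is
`2k`-sparse and `A (x̂ - p)` is the difference of the two residuals, so the lower bound on `A` gives
`α ‖x̂ - p‖₁ ≤ 2 ‖A p - y‖ ≤ 2 (β ‖x₀ - p‖₁ + ‖e‖)`. The triangle inequality through `p` and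
`‖x₀ - p‖₁ = τ_k(x₀)` finish the proof.
-/

theorem ncard_support_sub_le {ι G : Type*} [Finite ι] [AddGroup G] (x z : ι → G) :
    (Function.support (x - z)).ncard ≤
      (Function.support x).ncard + (Function.support z).ncard :=
  (Set.ncard_le_ncard (Function.support_sub x z)).trans (Set.ncard_union_le _ _)

theorem norm_map_sub_le_two_mul {E F H : Type*} [AddGroup E] [SeminormedAddCommGroup F]
    [FunLike H E F] [AddMonoidHomClass H E F] {A : H} {y : F} {x p : E}
    (hfit : ‖A x - y‖ ≤ ‖A p - y‖) : ‖A (x - p)‖ ≤ 2 * ‖A p - y‖ :=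
  calc ‖A (x - p)‖ = ‖(A x - y) - (A p - y)‖ := by rw [map_sub, sub_sub_sub_cancel_right]
    _ ≤ ‖A x - y‖ + ‖A p - y‖ := norm_sub_le _ _
    _ ≤ 2 * ‖A p - y‖ := by linarith

section LinearMap

variable {𝕜 ι F : Type*} [NormedField 𝕜] [SeminormedAddCommGroup F] [NormedSpace 𝕜 F]
  [Fintype ι] [DecidableEq ι]

theorem norm_map_le_iSup_mul_sum (A : (ι → 𝕜) →ₗ[𝕜] F) (x : ι → 𝕜) :
    ‖A x‖ ≤ (⨆ i, ‖A (Pi.single i 1)‖) * ∑ i, ‖x i‖ := by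
  have hcols : A x = ∑ i, x i • A (Pi.single i 1) := by
    conv_lhs => rw [pi_eq_sum_univ' x]
    simp only [map_sum, map_smul]
  calc ‖A x‖ ≤ ∑ i, ‖x i • A (Pi.single i 1)‖ := hcols ▸ norm_sum_le _ _
    _ = ∑ i, ‖A (Pi.single i 1)‖ * ‖x i‖ := by simp only [norm_smul, mul_comm]
    _ ≤ ∑ i, (⨆ j, ‖A (Pi.single j 1)‖) * ‖x i‖ := by
      gcongr with i
      exact Finite.le_ciSup (fun j => ‖A (Pi.single j 1)‖) i
    _ = (⨆ i, ‖A (Pi.single i 1)‖) * ∑ i, ‖x i‖ := (Finset.mul_sum _ _ _).symm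

theorem norm_map_sub_map_add_le (A : (ι → 𝕜) →ₗ[𝕜] F) (x₀ p : ι → 𝕜) (e : F) :
    ‖A p - (A x₀ + e)‖ ≤ (⨆ i, ‖A (Pi.single i 1)‖) * ∑ i, ‖x₀ i - p i‖ + ‖e‖ := by
  have hsplit : A p - (A x₀ + e) = -(A (x₀ - p) + e) := by
    rw [map_sub]
    abel
  rw [hsplit, norm_neg]
  exact (norm_add_le _ _).trans
    (add_le_add_left (norm_map_le_iSup_mul_sum A (x₀ - p)) _)

theorem stmt5_general (k : ℕ) (A : (ι → 𝕜) →ₗ[𝕜] F) (y : F) (x₀ : ι → 𝕜) (e : F)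
    (hy : y = A x₀ + e) (α : ℝ) (hα : 0 < α)
    (hrip : ∀ x : ι → 𝕜, (Function.support x).ncard ≤ 2 * k → α * ∑ i, ‖x i‖ ≤ ‖A x‖)
    (x p : ι → 𝕜) (hx : (Function.support x).ncard ≤ k) (hp : (Function.support p).ncard ≤ k)
    (hfit : ‖A x - y‖ ≤ ‖A p - y‖) :
    ∑ i, ‖x i - x₀ i‖ ≤
      (2 / α) * ‖e‖ + (1 + 2 * (⨆ i, ‖A (Pi.single i 1)‖) / α) * ∑ i, ‖x₀ i - p i‖ := by
  set β := ⨆ i, ‖A (Pi.single i 1)‖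
  have hsparse : (Function.support (x - p)).ncard ≤ 2 * k := by
    linarith [ncard_support_sub_le x p]
  have hdist : α * ∑ i, ‖x i - p i‖ ≤ 2 * (β * ∑ i, ‖x₀ i - p i‖ + ‖e‖) :=
    calc α * ∑ i, ‖x i - p i‖ ≤ ‖A (x - p)‖ := hrip (x - p) hsparse
      _ ≤ 2 * ‖A p - y‖ := norm_map_sub_le_two_mul hfit
      _ ≤ 2 * (β * ∑ i, ‖x₀ i - p i‖ + ‖e‖) := by
        rw [hy]
        gcongr
        exact norm_map_sub_map_add_le A x₀ p e
  calc ∑ i, ‖x i - x₀ i‖ ≤ ∑ i, (‖x i - p i‖ + ‖x₀ i - p i‖) := by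
        gcongr with i
        simpa only [dist_eq_norm] using dist_triangle_right (x i) (x₀ i) (p i)
    _ = ∑ i, ‖x i - p i‖ + ∑ i, ‖x₀ i - p i‖ := Finset.sum_add_distrib
    _ ≤ 2 * (β * ∑ i, ‖x₀ i - p i‖ + ‖e‖) / α + ∑ i, ‖x₀ i - p i‖ := by
        gcongr
        exact (le_div_iff₀' hα).mpr hdist
    _ = (2 / α) * ‖e‖ + (1 + 2 * β / α) * ∑ i, ‖x₀ i - p i‖ := by ring

end LinearMap

section TrimmedLasso

variable {d k : ℕ} {x : Fin d → ℝ}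

theorem tauTL_nonneg (k : ℕ) (x : Fin d → ℝ) : 0 ≤ tauTL k x := by
  refine Real.sInf_nonneg ?_
  rintro _ ⟨Λ, -, rfl⟩
  exact Finset.sum_nonneg fun i _ => abs_nonneg _

theorem tauTL_le_sum {Λ : Finset (Fin d)} (hΛ : Λ.card = d - k) (x : Fin d → ℝ) :
    tauTL k x ≤ ∑ i ∈ Λ, |x i| :=
  csInf_le (Set.toFinite _).bddBelow ⟨Λ, hΛ, rfl⟩

theorem le_tauTL {c : ℝ} (h : ∀ Λ : Finset (Fin d), Λ.card = d - k → c ≤ ∑ i ∈ Λ, |x i|) :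
    c ≤ tauTL k x := by
  obtain ⟨Λ₀, -, hΛ₀⟩ : ∃ Λ ⊆ (univ : Finset (Fin d)), Λ.card = d - k :=
    Finset.exists_subset_card_eq (by simp)
  refine le_csInf ⟨_, Λ₀, hΛ₀, rfl⟩ ?_
  rintro _ ⟨Λ, hΛ, rfl⟩
  exact h Λ hΛ

theorem tauTL_le_sum_abs_sub {z : Fin d → ℝ} (hz : (Function.support z).ncard ≤ k)
    (x : Fin d → ℝ) : tauTL k x ≤ ∑ i, |x i - z i| := by
  classical
  have hzeros : d - k ≤ (Function.support z)ᶜ.toFinset.card := by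
    rw [← Set.ncard_eq_toFinset_card', Set.ncard_compl, Nat.card_fin]
    omega
  obtain ⟨Λ, hΛ, hcard⟩ := Finset.exists_subset_card_eq hzeros
  have hzero : ∀ i ∈ Λ, z i = 0 := fun i hi => by simpa using hΛ hi
  calc tauTL k x ≤ ∑ i ∈ Λ, |x i| := tauTL_le_sum hcard x
    _ = ∑ i ∈ Λ, |x i - z i| := Finset.sum_congr rfl fun i hi => by rw [hzero i hi, sub_zero]
    _ ≤ ∑ i, |x i - z i| := Finset.sum_le_univ_sum_of_nonneg fun i => abs_nonneg _

theorem tauTL_eq_zero_of_ncard_support_le (hx : (Function.support x).ncard ≤ k) :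
    tauTL k x = 0 :=
  le_antisymm (by simpa using tauTL_le_sum_abs_sub hx x) (tauTL_nonneg k x)

theorem IsKSparseProj.sum_abs_sub_eq_tauTL {p : Fin d → ℝ} (hp : IsKSparseProj k x p) :
    ∑ i, |x i - p i| = tauTL k x := by
  refine le_antisymm (le_tauTL fun Λ hΛ => ?_) (tauTL_le_sum_abs_sub hp.1 x)
  let z : Fin d → ℝ := (Λ : Set (Fin d))ᶜ.indicator x
  have hz : (Function.support z).ncard ≤ k :=
    calc (Function.support z).ncard ≤ (Λ : Set (Fin d))ᶜ.ncard :=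
          Set.ncard_le_ncard Set.support_indicator_subset
      _ = d - (d - k) := by rw [Set.ncard_compl, Set.ncard_coe_finset, Nat.card_fin, hΛ]
      _ ≤ k := by omega
  have hdiff : x - z = (Λ : Set (Fin d)).indicator x := by
    simp only [z, Set.indicator_compl, sub_sub_cancel]
  calc ∑ i, |x i - p i| ≤ ∑ i, |(x - z) i| := hp.2 z hz
    _ = ∑ i, (Λ : Set (Fin d)).indicator (fun j => |x j|) i := by
      simp only [hdiff, Set.indicator_apply, apply_ite abs, abs_zero]
    _ = ∑ i ∈ Λ, |x i| := Finset.sum_indicator_subset _ (Finset.subset_univ Λ)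

end TrimmedLasso

theorem l2norm_eq_norm_toLp {m : ℕ} (v : Fin m → ℝ) : l2norm v = ‖WithLp.toLp 2 v‖ := by
  simp only [l2norm, EuclideanSpace.norm_eq, Real.norm_eq_abs, sq_abs]

/-- The linear map `x ↦ A x` into `ℝⁿ` with its Euclidean norm, to which `stmt5_general` is applied:
the type `Fin n → ℝ` itself carries the sup norm. -/
noncomputable def mulVecEuclidean {n d : ℕ} (A : Matrix (Fin n) (Fin d) ℝ) :
    (Fin d → ℝ) →ₗ[ℝ] EuclideanSpace ℝ (Fin n) :=
  (WithLp.linearEquiv 2 ℝ (Fin n → ℝ)).symm ∘ₗ A.mulVecLin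

theorem toLp_mulVec {n d : ℕ} (A : Matrix (Fin n) (Fin d) ℝ) (x : Fin d → ℝ) :
    WithLp.toLp 2 (A.mulVec x) = mulVecEuclidean A x :=
  rfl

theorem toLp_col {n d : ℕ} (A : Matrix (Fin n) (Fin d) ℝ) (i : Fin d) :
    WithLp.toLp 2 (fun j => A j i) = mulVecEuclidean A (Pi.single i 1) :=
  congrArg (WithLp.toLp 2) (A.mulVec_single_one i).symm

theorem l2norm_le_of_objective_le {n d k : ℕ} {lam : ℝ} {x p : Fin d → ℝ} {u v : Fin n → ℝ}
    (hx : (Function.support x).ncard ≤ k) (hp : (Function.support p).ncard ≤ k)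
    (hopt : (1 / 2) * l2norm u ^ 2 + lam * tauTL k x ≤
      (1 / 2) * l2norm v ^ 2 + lam * tauTL k p) :
    l2norm u ≤ l2norm v := by
  rw [tauTL_eq_zero_of_ncard_support_le hx, tauTL_eq_zero_of_ncard_support_le hp] at hopt
  have hsq : l2norm u ^ 2 ≤ l2norm v ^ 2 := by linarith
  exact (sq_le_sq₀ (Real.sqrt_nonneg _) (Real.sqrt_nonneg _)).mp hsq

/-- Sparse recovery guarantee for the power-2 trimmed-lasso objective,
when the candidate solution x̂ is itself k-sparse. -/
theorem stmt5 {n d : ℕ} (k : ℕ) (hk : 0 < k) (hkd : k < d)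
    (A : Matrix (Fin n) (Fin d) ℝ) (y : Fin n → ℝ)
    (x0 : Fin d → ℝ) (e : Fin n → ℝ) (hy : y = A.mulVec x0 + e)
    (α : ℝ) (hα : 0 < α)
    (hrip : ∀ x : Fin d → ℝ, Set.ncard {i : Fin d | x i ≠ 0} ≤ 2 * k →
      α * (∑ i, |x i|) ≤ l2norm (A.mulVec x))
    (lam : ℝ) (hlam : 0 < lam)
    (xhat px0 : Fin d → ℝ)
    (hxhatsparse : Set.ncard {i : Fin d | xhat i ≠ 0} ≤ k)
    (hpx0 : IsKSparseProj k x0 px0)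
    (hopt : (1 / 2) * (l2norm (A.mulVec xhat - y)) ^ 2 + lam * tauTL k xhat ≤
            (1 / 2) * (l2norm (A.mulVec px0 - y)) ^ 2 + lam * tauTL k px0) :
    (∑ i, |xhat i - x0 i|) ≤
      (2 / α) * l2norm e +
      (1 + 2 * (⨆ i : Fin d, l2norm (fun j => A j i)) / α) * tauTL k x0 := by
  have hfit := l2norm_le_of_objective_le hxhatsparse hpx0.1 hopt
  simp only [l2norm_eq_norm_toLp, WithLp.toLp_sub, toLp_mulVec, toLp_col,
    ← hpx0.sum_abs_sub_eq_tauTL] at hfit hrip ⊢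
  exact stmt5_general k (mulVecEuclidean A) (WithLp.toLp 2 y) x0 (WithLp.toLp 2 e)
    (congrArg (WithLp.toLp 2) hy) α hα hrip xhat px0 hxhatsparse hpx0.1 hfit
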